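/- arXiv:2212.14236 — 2 statements merged into one kernel-verified Lean document; each statement's English description precedes it below -/
import Mathlib

section
/- If x̂ is a non-observable direction, i.e. ξ_max − ξ_min < T, then for every y ∈ ℝ^d the test function φ_y^{(x̂)} does not belong to the range of the data-to-pattern operator L^{(x̂)} : L²(t_min, t_max) → L²(0, K). -/
open MeasureTheory

noncomputable section

lemma aux_differentiable (μ : Measure ℝ) (h : ℝ → ℝ) (ψ : ℝ → ℂ) (M : ℝ)
    (hψ : Integrable ψ μ) (hm : AEStronglyMeasurable h μ) (hM : ∀ᵐ t ∂μ, |h t| ≤ M) :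
    Differentiable ℂ (fun z : ℂ => ∫ t, Complex.exp (-(Complex.I) * z * (h t)) * ψ t ∂μ) := by
  intro z₀
  have hmc : AEStronglyMeasurable (fun t => (h t : ℂ)) μ :=
    Complex.continuous_ofReal.comp_aestronglyMeasurable hm
  have hme : ∀ z : ℂ, AEStronglyMeasurable
      (fun t => Complex.exp (-(Complex.I) * z * (h t))) μ := fun z =>
    Complex.continuous_exp.comp_aestronglyMeasurable (hmc.const_mul _)
  have hbd : ∀ z : ℂ, ∀ t, |h t| ≤ M →
      ‖Complex.exp (-(Complex.I) * z * (h t))‖ ≤ Real.exp (‖z‖ * M) := by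
    intro z t ht
    refine (Complex.norm_exp_le_exp_norm _).trans (Real.exp_le_exp.2 ?_)
    simp only [norm_mul, norm_neg, Complex.norm_I, one_mul, Complex.norm_real, Real.norm_eq_abs]
    gcongr
  have key := hasDerivAt_integral_of_dominated_loc_of_deriv_le (μ := μ) (𝕜 := ℂ)
    (F := fun z t => Complex.exp (-(Complex.I) * z * (h t)) * ψ t)
    (F' := fun z t => Complex.exp (-(Complex.I) * z * (h t)) * (-(Complex.I) * (h t)) * ψ t)
    (x₀ := z₀) (s := Metric.ball z₀ 1)
    (bound := fun t => Real.exp ((‖z₀‖ + 1) * |M|) * |M| * ‖ψ t‖)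
    (Metric.ball_mem_nhds _ one_pos)
    (Filter.Eventually.of_forall fun z => (hme z).mul hψ.1)
    ?_ (((hme z₀).mul (hmc.const_mul _)).mul hψ.1) ?_ (hψ.norm.const_mul _) ?_
  · exact key.2.differentiableAt
  · exact hψ.bdd_mul (hme z₀) (hM.mono fun t ht => hbd z₀ t ht)
  · filter_upwards [hM] with t ht z hz
    have hz' : ‖z‖ ≤ ‖z₀‖ + 1 := by
      have := norm_sub_norm_le z z₀
      rw [mem_ball_iff_norm] at hz
      linarith
    simp only [norm_mul, norm_neg, Complex.norm_I, one_mul, Complex.norm_real, Real.norm_eq_abs]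
    have hM0 : 0 ≤ M := (abs_nonneg _).trans ht
    have hb : ‖Complex.exp (-(Complex.I) * z * (h t))‖ ≤ Real.exp ((‖z₀‖ + 1) * |M|) := by
      refine (hbd z t ht).trans (Real.exp_le_exp.2 ?_)
      rw [abs_of_nonneg hM0]
      gcongr
    have hb2 : |h t| ≤ |M| := ht.trans (le_abs_self M)
    exact mul_le_mul_of_nonneg_right (mul_le_mul hb hb2 (abs_nonneg _) (Real.exp_pos _).le)
      (norm_nonneg _)
  · refine Filter.Eventually.of_forall fun t z _ => ?_
    have h1 : HasDerivAt (fun z : ℂ => -(Complex.I) * z * (h t)) (-(Complex.I) * (h t)) z := by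
      simpa using ((hasDerivAt_id z).const_mul (-(Complex.I))).mul_const (h t : ℂ)
    exact h1.cexp.mul_const _

lemma aux_identity (F G : ℂ → ℂ) (hF : Differentiable ℂ F) (hG : Differentiable ℂ G)
    (K : ℝ) (hK : 0 < K)
    (hFG : (fun τ : ℝ => F τ) =ᵐ[volume.restrict (Set.Ioo 0 K)] fun τ : ℝ => G τ) : F = G := by
  have hEq : Set.EqOn (fun τ : ℝ => F τ) (fun τ : ℝ => G τ) (Set.Ioo 0 K) :=
    Measure.eqOn_open_of_ae_eq hFG isOpen_Ioo
      (hF.continuous.comp Complex.continuous_ofReal).continuousOn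
      (hG.continuous.comp Complex.continuous_ofReal).continuousOn
  have hFa : AnalyticOnNhd ℂ F Set.univ := fun z _ => hF.analyticAt z
  have hGa : AnalyticOnNhd ℂ G Set.univ := fun z _ => hG.analyticAt z
  refine hFa.eq_of_frequently_eq hGa (z₀ := ((K / 2 : ℝ) : ℂ)) ?_
  have ht : Filter.Tendsto (fun x : ℝ => (x : ℂ)) (nhdsWithin (K / 2) {K / 2}ᶜ)
      (nhdsWithin ((K / 2 : ℝ) : ℂ) {((K / 2 : ℝ) : ℂ)}ᶜ) := by
    refine tendsto_nhdsWithin_of_tendsto_nhds_of_eventually_within _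
      (Complex.continuous_ofReal.continuousAt.tendsto.mono_left nhdsWithin_le_nhds) ?_
    filter_upwards [self_mem_nhdsWithin] with x hx
    simpa only [Set.mem_compl_iff, Set.mem_singleton_iff, Complex.ofReal_inj] using hx
  refine ht.frequently (Filter.Eventually.frequently ?_)
  filter_upwards [nhdsWithin_le_nhds (Ioo_mem_nhds (half_pos hK) (half_lt_self hK))] with x hx
  exact hEq hx

lemma aux_upper (μ : Measure ℝ) (h : ℝ → ℝ) (ψ : ℝ → ℂ) (s m : ℝ)
    (hψ : Integrable ψ μ) (hM : ∀ᵐ t ∂μ, s * h t ≤ m) :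
    ‖∫ t, Complex.exp (-(Complex.I) * (Complex.I * s) * (h t)) * ψ t ∂μ‖
      ≤ Real.exp m * ∫ t, ‖ψ t‖ ∂μ := by
  rw [← integral_const_mul]
  refine norm_integral_le_of_norm_le (hψ.norm.const_mul _) ?_
  filter_upwards [hM] with t ht
  rw [norm_mul, Complex.norm_exp]
  gcongr
  have : -(Complex.I) * (Complex.I * s) * (h t) = ((s * h t : ℝ) : ℂ) := by
    push_cast
    linear_combination (-(s : ℂ) * h t) * Complex.I_mul_I
  rw [this, Complex.ofReal_re]
  exact ht

lemma aux_lower (a b c p q s m : ℝ) (hap : a ≤ p) (hpq : p ≤ q) (hqb : q ≤ b)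
    (hm : ∀ t ∈ Set.Ioo p q, m ≤ s * (c + t)) :
    (q - p) * Real.exp m ≤
    ‖∫ t in Set.Ioo a b, Complex.exp (-(Complex.I) * (Complex.I * s) * ((c + t : ℝ) : ℂ)) * 1‖ := by
  have : ∀ t : ℝ, Complex.exp (-(Complex.I) * (Complex.I * s) * ((c + t : ℝ) : ℂ)) * 1
      = ((Real.exp (s * (c + t)) : ℝ) : ℂ) := by
    intro t
    push_cast
    rw [mul_one]
    congr 1
    linear_combination (-(s : ℂ) * (c + t)) * Complex.I_mul_I
  simp_rw [this]
  rw [integral_complex_ofReal, Complex.norm_real]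
  refine le_trans ?_ (le_abs_self _)
  have hint : IntegrableOn (fun t => Real.exp (s * (c + t))) (Set.Ioo a b) :=
    ((by fun_prop : Continuous fun t => Real.exp (s * (c + t))).integrableOn_Icc).mono_set
      Set.Ioo_subset_Icc_self
  have hsub : Set.Ioo p q ⊆ Set.Ioo a b := Set.Ioo_subset_Ioo hap hqb
  calc (q - p) * Real.exp m = ∫ t in Set.Ioo p q, Real.exp m := by
        simp [hpq]
    _ ≤ ∫ t in Set.Ioo p q, Real.exp (s * (c + t)) := by
        refine setIntegral_mono_on (by simp) (hint.mono_set hsub) measurableSet_Ioo ?_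
        intro t ht
        exact Real.exp_le_exp.2 (hm t ht)
    _ ≤ _ := setIntegral_mono_set hint (Filter.Eventually.of_forall fun t => (Real.exp_pos _).le)
        hsub.eventuallyLE

/-- If `x̂` is a non-observable direction, i.e. `ξ_max − ξ_min < T`, then
for every `y ∈ ℝ^d` the test function `φ_y^{(x̂)}` does not belong to the range of the
data-to-pattern operator `L^{(x̂)} : L²(t_min,t_max) → L²(0,K)`. -/
theorem testFunction_not_in_range_of_nonobservable
    {d : ℕ} (hd : d = 2 ∨ d = 3)
    (tmin tmax T : ℝ) (htmin : 0 < tmin) (htt : tmin < tmax)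
    (hT : T = tmax - tmin)
    (K : ℝ) (hK : 0 < K)
    (a : ℝ → EuclideanSpace ℝ (Fin d))
    (ha : ContDiffOn ℝ 1 a (Set.Icc tmin tmax))
    (xhat : EuclideanSpace ℝ (Fin d)) (hxhat : ‖xhat‖ = 1)
    (h : ℝ → ℝ) (hh : ∀ t, h t = t + inner ℝ xhat (a t))
    (ξmin ξmax : ℝ)
    (hξmin : ξmin = sInf (h '' Set.Icc tmin tmax))
    (hξmax : ξmax = sSup (h '' Set.Icc tmin tmax))
    (hnonobs : ξmax - ξmin < T)
    (L : Lp ℂ 2 (volume.restrict (Set.Ioo tmin tmax)) →L[ℂ]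
         Lp ℂ 2 (volume.restrict (Set.Ioo 0 K)))
    (hL : ∀ ψ : Lp ℂ 2 (volume.restrict (Set.Ioo tmin tmax)),
      (L ψ : ℝ → ℂ) =ᵐ[volume.restrict (Set.Ioo 0 K)]
        fun τ => ∫ t in Set.Ioo tmin tmax,
          Complex.exp (-(Complex.I) * τ * (h t)) * ψ t) :
    ∀ y : EuclideanSpace ℝ (Fin d),
      ¬ ∃ ψ : Lp ℂ 2 (volume.restrict (Set.Ioo tmin tmax)),
        (L ψ : ℝ → ℂ) =ᵐ[volume.restrict (Set.Ioo 0 K)]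
          fun k => (1 / (T : ℂ)) *
            ∫ t in Set.Ioo tmin tmax,
              Complex.exp (-(Complex.I) * k * ((inner ℝ xhat y : ℝ) + t)) := by
  rintro y ⟨ψ, hψeq⟩
  set c : ℝ := inner ℝ xhat y with hc
  have hTpos : 0 < T := by linarith
  have hcont : ContinuousOn h (Set.Icc tmin tmax) := by
    have : h = fun t => t + inner ℝ xhat (a t) := funext hh
    rw [this]
    exact continuousOn_id.add (continuousOn_const.inner ha.continuousOn)
  have hcomp : IsCompact (h '' Set.Icc tmin tmax) := isCompact_Icc.image_of_continuousOn hcont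
  have hlo : ∀ t ∈ Set.Ioo tmin tmax, ξmin ≤ h t := fun t ht => by
    rw [hξmin]
    exact csInf_le hcomp.bddBelow (Set.mem_image_of_mem _ (Set.Ioo_subset_Icc_self ht))
  have hhi : ∀ t ∈ Set.Ioo tmin tmax, h t ≤ ξmax := fun t ht => by
    rw [hξmax]
    exact le_csSup hcomp.bddAbove (Set.mem_image_of_mem _ (Set.Ioo_subset_Icc_self ht))
  have hmem : ∀ᵐ t ∂(volume.restrict (Set.Ioo tmin tmax)), t ∈ Set.Ioo tmin tmax := ae_restrict_mem measurableSet_Ioo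
  have hψi : Integrable (ψ : ℝ → ℂ) (volume.restrict (Set.Ioo tmin tmax)) := (Lp.memLp ψ).integrable (by norm_num)
  have hG := aux_differentiable (volume.restrict (Set.Ioo tmin tmax)) h ψ (max |ξmin| |ξmax|) hψi
    ((hcont.mono Set.Ioo_subset_Icc_self).aestronglyMeasurable measurableSet_Ioo)
    (hmem.mono fun t ht => abs_le_max_abs_abs (hlo t ht) (hhi t ht))
  have hF := aux_differentiable (volume.restrict (Set.Ioo tmin tmax)) (fun t => c + t) (fun _ => 1)
    (max |c + tmin| |c + tmax|) (integrable_const _)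
    (by fun_prop)
    (hmem.mono fun t ht => abs_le_max_abs_abs (by linarith [ht.1]) (by linarith [ht.2]))
  have hEq := aux_identity _ _ hG (hF.const_mul (1 / (T : ℂ))) K hK (by
    refine (hL ψ).symm.trans (hψeq.trans (Filter.Eventually.of_forall fun k => ?_))
    simp)
  set ε : ℝ := (T - (ξmax - ξmin)) / 4 with hε
  have hεpos : 0 < ε := by rw [hε]; linarith
  have hεT : ε ≤ T := by
    have h0 : tmin < (tmin + tmax) / 2 ∧ (tmin + tmax) / 2 < tmax := by constructor <;> linarith
    have := (hlo _ h0).trans (hhi _ h0)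
    rw [hε]; linarith
  set C : ℝ := ∫ t, ‖ψ t‖ ∂(volume.restrict (Set.Ioo tmin tmax)) with hC
  have hC0 : 0 ≤ C := integral_nonneg fun t => norm_nonneg _
  -- the two growth bounds, for every `s > 0`
  have h1 : ∀ s : ℝ, 0 < s →
      1 / T * (ε * Real.exp (s * (c + tmax - ε))) ≤ Real.exp (s * ξmax) * C := by
    intro s hs
    have hu := aux_upper (volume.restrict (Set.Ioo tmin tmax)) h ψ s (s * ξmax) hψi
      (hmem.mono fun t ht => mul_le_mul_of_nonneg_left (hhi t ht) hs.le)
    have hl := aux_lower tmin tmax c (tmax - ε) tmax s (s * (c + tmax - ε)) (by linarith)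
      (by linarith) le_rfl
      (fun t ht => mul_le_mul_of_nonneg_left (by linarith [ht.1]) hs.le)
    have he := congrFun hEq (Complex.I * s)
    rw [he, norm_mul] at hu
    refine le_trans ?_ hu
    have : ‖(1 / (T : ℂ))‖ = 1 / T := by simp [abs_of_pos hTpos]
    rw [this]
    have : tmax - (tmax - ε) = ε := by ring
    rw [this] at hl
    gcongr
  have h2 : ∀ s : ℝ, 0 < s →
      1 / T * (ε * Real.exp (-s * (c + tmin + ε))) ≤ Real.exp (-s * ξmin) * C := by
    intro s hs
    have hu := aux_upper (volume.restrict (Set.Ioo tmin tmax)) h ψ (-s) (-s * ξmin) hψi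
      (hmem.mono fun t ht => by nlinarith [hlo t ht])
    have hl := aux_lower tmin tmax c tmin (tmin + ε) (-s) (-s * (c + tmin + ε)) le_rfl
      (by linarith) (by linarith)
      (fun t ht => by nlinarith [ht.2])
    have he := congrFun hEq (Complex.I * (-s : ℝ))
    rw [he, norm_mul] at hu
    refine le_trans ?_ hu
    have : ‖(1 / (T : ℂ))‖ = 1 / T := by simp [abs_of_pos hTpos]
    rw [this]
    have : tmin + ε - tmin = ε := by ring
    rw [this] at hl
    gcongr
  have h3 : ∀ s : ℝ, 0 < s → (ε / T) ^ 2 * Real.exp (s * (2 * ε)) ≤ C ^ 2 := by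
    intro s hs
    have hm := mul_le_mul (h1 s hs) (h2 s hs) (by positivity) (by positivity)
    have e1 : s * (c + tmax - ε) + -s * (c + tmin + ε)
        = s * (2 * ε) + (s * ξmax + -s * ξmin) := by rw [hε, hT]; ring
    have e2 : 1 / T * (ε * Real.exp (s * (c + tmax - ε))) *
        (1 / T * (ε * Real.exp (-s * (c + tmin + ε))))
        = ((ε / T) ^ 2 * Real.exp (s * (2 * ε))) * Real.exp (s * ξmax + -s * ξmin) := by
      rw [mul_assoc ((ε / T) ^ 2), ← Real.exp_add, ← e1, Real.exp_add]; ring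
    have e3 : Real.exp (s * ξmax) * C * (Real.exp (-s * ξmin) * C)
        = C ^ 2 * Real.exp (s * ξmax + -s * ξmin) := by
      rw [Real.exp_add]; ring
    rw [e2, e3] at hm
    exact le_of_mul_le_mul_right hm (Real.exp_pos _)
  have hr : 0 < (ε / T) ^ 2 := by positivity
  set r := (ε / T) ^ 2
  have hs : 0 < (C ^ 2 / r + 1) / (2 * ε) := by positivity
  have h4 := h3 _ hs
  rw [div_mul_cancel₀ _ (by positivity)] at h4
  have h5 := Real.add_one_le_exp (C ^ 2 / r + 1)
  have h6 : r * (C ^ 2 / r + 1 + 1) ≤ C ^ 2 := le_trans (by gcongr) h4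
  have h7 : r * (C ^ 2 / r + 1 + 1) = C ^ 2 + 2 * r := by field_simp; ring
  linarith
end
end

section
/- Let x̂ be an observable direction, i.e. ξ_max − ξ_min ≥ T. Then for every y ∈ ℝ^d, the test function φ_y^{(x̂)} belongs to the range of the data-to-pattern operator L^{(x̂)} : L²(t_min, t_max) → L²(0, K) if and only if y ∈ K_Γ^{(x̂)}, i.e. if and only if ξ_min − t_min ≤ x̂·y ≤ ξ_max − t_max. -/
open MeasureTheory

noncomputable section

open Filter Topology

/-- Parametric Fourier-type integrals with bounded phase are entire. -/
lemma aux_entire (μ : Measure ℝ) (g : ℝ → ℝ) (ψ : ℝ → ℂ)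
    (hg : AEStronglyMeasurable g μ) (M : ℝ) (hM : ∀ᵐ t ∂μ, |g t| ≤ M)
    (hψ : Integrable ψ μ) :
    Differentiable ℂ (fun z : ℂ => ∫ t, Complex.exp (-(Complex.I) * z * (g t)) * ψ t ∂μ) := by
  intro z₀
  have hgc : AEStronglyMeasurable (fun t => (g t : ℂ)) μ :=
    Complex.continuous_ofReal.comp_aestronglyMeasurable hg
  have hexp : ∀ z : ℂ, AEStronglyMeasurable
      (fun t => Complex.exp (-(Complex.I) * z * (g t))) μ := fun z =>
    Complex.continuous_exp.comp_aestronglyMeasurable (hgc.const_mul _)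
  have hbd : ∀ z : ℂ, ∀ t, |g t| ≤ M →
      ‖Complex.exp (-(Complex.I) * z * (g t))‖ ≤ Real.exp (‖z‖ * M) := by
    intro z t ht
    rw [Complex.norm_exp]
    apply Real.exp_le_exp.mpr
    refine (Complex.re_le_norm _).trans ?_
    simp only [norm_mul, norm_neg, Complex.norm_I, one_mul, Complex.norm_real, Real.norm_eq_abs]
    gcongr
  have key := hasDerivAt_integral_of_dominated_loc_of_deriv_le (μ := μ) (𝕜 := ℂ)
    (F := fun z t => Complex.exp (-(Complex.I) * z * (g t)) * ψ t)
    (F' := fun z t => (-(Complex.I) * (g t)) * (Complex.exp (-(Complex.I) * z * (g t)) * ψ t))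
    (x₀ := z₀) (s := Metric.ball z₀ 1)
    (bound := fun t => M * (Real.exp ((‖z₀‖ + 1) * M) * ‖ψ t‖))
    (Metric.ball_mem_nhds _ one_pos) ?_ ?_ ?_ ?_ ?_ ?_
  · exact key.2.differentiableAt
  · exact Eventually.of_forall fun z => (hexp z).mul hψ.1
  · refine hψ.bdd_mul (c := Real.exp (‖z₀‖ * M)) (hexp z₀) ?_
    filter_upwards [hM] with t ht using hbd z₀ t ht
  · exact (hgc.const_mul _).mul ((hexp z₀).mul hψ.1)
  · filter_upwards [hM] with t ht z hz
    have hM0 : 0 ≤ M := (abs_nonneg _).trans ht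
    have hz' : ‖z‖ ≤ ‖z₀‖ + 1 := by
      have h1 : ‖z - z₀‖ < 1 := by simpa [dist_eq_norm] using hz
      have h2 : ‖z‖ ≤ ‖z₀‖ + ‖z - z₀‖ := norm_le_insert' z z₀
      linarith
    have h3 : ‖Complex.exp (-(Complex.I) * z * (g t))‖ ≤ Real.exp ((‖z₀‖ + 1) * M) :=
      (hbd z t ht).trans (Real.exp_le_exp.mpr (by gcongr))
    rw [norm_mul, norm_mul (Complex.exp _)]
    have h4 : ‖-(Complex.I) * (g t : ℂ)‖ ≤ M := by simpa using ht
    gcongr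
  · exact (hψ.norm.const_mul _).const_mul _
  · filter_upwards with t z hz
    have h1 : HasDerivAt (fun z : ℂ => -(Complex.I) * z * (g t)) (-(Complex.I) * (g t)) z := by
      simpa using ((hasDerivAt_id z).const_mul (-(Complex.I))).mul_const (g t : ℂ)
    exact (h1.cexp.mul_const (ψ t)).congr_deriv (by ring)

/-- Exponential growth comparison. -/
lemma aux_growth (p q C : ℝ) (u : ℝ → ℝ) (hu : Continuous u)
    (hC : ∀ s : ℝ, 0 < s → ∫ t in Set.Ioo p q, Real.exp (s * u t) ≤ C) :
    ∀ t ∈ Set.Ioo p q, u t ≤ 0 := by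
  have hint : ∀ f : ℝ → ℝ, Continuous f → IntegrableOn f (Set.Ioo p q) := fun f hf =>
    (hf.integrableOn_Icc (a := p) (b := q)).mono_set Set.Ioo_subset_Icc_self
  have hup : Continuous (fun t => max (u t) 0) := hu.max continuous_const
  have h1 : ∀ s : ℝ, 0 < s → s * ∫ t in Set.Ioo p q, max (u t) 0 ≤ C := by
    intro s hs
    refine le_trans ?_ (hC s hs)
    rw [← integral_const_mul]
    refine integral_mono (hint _ (by fun_prop)) (hint _ (by fun_prop)) ?_
    intro t
    show s * max (u t) 0 ≤ Real.exp (s * u t)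
    rcases le_total (u t) 0 with h | h
    · rw [max_eq_right h]; simp [Real.exp_nonneg]
    · rw [max_eq_left h]; linarith [Real.add_one_le_exp (s * u t)]
  have h0 : 0 ≤ ∫ t in Set.Ioo p q, max (u t) 0 := integral_nonneg fun t => le_max_right _ _
  have h2 : ∫ t in Set.Ioo p q, max (u t) 0 = 0 := by
    by_contra hne
    have hpos := lt_of_le_of_ne h0 (Ne.symm hne)
    have h3 := h1 ((|C| + 1) / ∫ t in Set.Ioo p q, max (u t) 0) (by positivity)
    rw [div_mul_cancel₀ _ hne] at h3
    linarith [le_abs_self C]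
  replace h2 := (integral_eq_zero_iff_of_nonneg (f := fun t => max (u t) 0)
    (fun t => le_max_right _ _) (hint _ hup)).mp h2
  have h4 := Measure.eqOn_open_of_ae_eq h2 isOpen_Ioo hup.continuousOn continuousOn_const
  intro t ht
  have := h4 ht
  simpa using this

lemma aux_bound (p q T M : ℝ) (hT : 0 < T) (g u : ℝ → ℝ) (ψ : ℝ → ℂ)
    (hu : Continuous u) (hg : ∀ t ∈ Set.Ioo p q, g t ≤ M)
    (hψ : IntegrableOn ψ (Set.Ioo p q))
    (heq : ∀ s : ℝ, 0 < s → ∫ t in Set.Ioo p q, Complex.exp (s * g t) * ψ t =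
      (1 / (T : ℂ)) * ∫ t in Set.Ioo p q, Complex.exp (s * u t)) :
    ∀ t ∈ Set.Ioo p q, u t ≤ M := by
  have := aux_growth p q (T * ∫ t in Set.Ioo p q, ‖ψ t‖) (fun t => u t - M) (by fun_prop) ?_
  · intro t ht
    linarith [this t ht]
  intro s hs
  have e1 : ∫ t in Set.Ioo p q, Real.exp (s * (u t - M)) =
      Real.exp (-(s * M)) * ∫ t in Set.Ioo p q, Real.exp (s * u t) := by
    rw [← integral_const_mul]
    congr 1; ext t
    rw [← Real.exp_add]; congr 1; ring
  have e2 : ((∫ t in Set.Ioo p q, Real.exp (s * u t) : ℝ) : ℂ) =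
      ∫ t in Set.Ioo p q, Complex.exp (s * u t) := by
    rw [← integral_complex_ofReal]
    simp
  have hTc : (T : ℂ) ≠ 0 := by exact_mod_cast hT.ne'
  have e3 : ((∫ t in Set.Ioo p q, Real.exp (s * u t) : ℝ) : ℂ) =
      T * ∫ t in Set.Ioo p q, Complex.exp (s * g t) * ψ t := by
    rw [heq s hs, e2]; field_simp
  have h0 : 0 ≤ ∫ t in Set.Ioo p q, Real.exp (s * u t) := integral_nonneg fun t => Real.exp_nonneg _
  have e4 : ∫ t in Set.Ioo p q, Real.exp (s * u t) =
      T * ‖∫ t in Set.Ioo p q, Complex.exp (s * g t) * ψ t‖ := by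
    have := congrArg norm e3
    rw [norm_mul, Complex.norm_real, Complex.norm_real, Real.norm_of_nonneg h0,
      Real.norm_of_nonneg hT.le] at this
    exact this
  have e5 : ‖∫ t in Set.Ioo p q, Complex.exp (s * g t) * ψ t‖ ≤
      ∫ t in Set.Ioo p q, Real.exp (s * M) * ‖ψ t‖ := by
    refine norm_integral_le_of_norm_le (hψ.norm.const_mul _) ?_
    refine (ae_restrict_mem measurableSet_Ioo).mono fun t ht => ?_
    rw [norm_mul, Complex.norm_exp]
    gcongr
    simpa using mul_le_mul_of_nonneg_left (hg t ht) hs.le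
  rw [integral_const_mul] at e5
  rw [e1, e4]
  calc Real.exp (-(s * M)) * (T * ‖∫ t in Set.Ioo p q, Complex.exp (s * g t) * ψ t‖)
      ≤ Real.exp (-(s * M)) * (T * (Real.exp (s * M) * ∫ t in Set.Ioo p q, ‖ψ t‖)) := by gcongr
    _ = (Real.exp (-(s * M)) * Real.exp (s * M)) * (T * ∫ t in Set.Ioo p q, ‖ψ t‖) := by ring
    _ = _ := by rw [← Real.exp_add]; simp

/-- Two entire functions agreeing almost everywhere on a real interval are equal. -/
lemma aux_ident (K : ℝ) (hK : 0 < K) (F G : ℂ → ℂ) (hF : Differentiable ℂ F)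
    (hG : Differentiable ℂ G)
    (h : (fun τ : ℝ => F τ) =ᵐ[volume.restrict (Set.Ioo 0 K)] fun τ : ℝ => G τ) : F = G := by
  have hE := Measure.eqOn_open_of_ae_eq h isOpen_Ioo
    (hF.continuous.comp Complex.continuous_ofReal).continuousOn
    (hG.continuous.comp Complex.continuous_ofReal).continuousOn
  have hFa : AnalyticOnNhd ℂ F Set.univ := fun z _ => hF.analyticAt z
  have hGa : AnalyticOnNhd ℂ G Set.univ := fun z _ => hG.analyticAt z
  refine hFa.eq_of_frequently_eq hGa (z₀ := ((K / 2 : ℝ) : ℂ)) ?_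
  have ht : Tendsto (fun x : ℝ => (x : ℂ)) (𝓝[≠] (K / 2)) (𝓝[≠] ((K / 2 : ℝ) : ℂ)) := by
    refine tendsto_nhdsWithin_of_tendsto_nhds_of_eventually_within _ ?_ ?_
    · exact (Complex.continuous_ofReal.tendsto _).mono_left nhdsWithin_le_nhds
    · filter_upwards [self_mem_nhdsWithin] with x hx
      exact fun he => hx (Complex.ofReal_injective he)
  refine ht.frequently ?_
  refine Eventually.frequently ?_
  have : Set.Ioo 0 K ∈ 𝓝 (K / 2) := Ioo_mem_nhds (by linarith) (by linarith)
  filter_upwards [nhdsWithin_le_nhds this] with x hx using hE hx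

/-- Existence: change of variables. -/
lemma aux_exists (p q c T : ℝ) (hpq : p < q) (h : ℝ → ℝ) (hh : ContDiffOn ℝ 1 h (Set.Icc p q))
    (t₁ t₂ : ℝ) (ht₁ : t₁ ∈ Set.Icc p q) (ht₂ : t₂ ∈ Set.Icc p q)
    (h₁ : h t₁ = c + p) (h₂ : h t₂ = c + q) :
    ∃ ψ : Lp ℂ 2 (volume.restrict (Set.Ioo p q)), ∀ k : ℝ,
      ∫ t in Set.Ioo p q, Complex.exp (-(Complex.I) * k * (h t)) * ψ t =
      (1 / (T : ℂ)) * ∫ t in Set.Ioo p q, Complex.exp (-(Complex.I) * k * (c + t)) := by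
  set D := derivWithin h (Set.Icc p q) with hD
  have hDc : ContinuousOn D (Set.Icc p q) :=
    hh.continuousOn_derivWithin (uniqueDiffOn_Icc hpq) le_rfl
  have hsub : Set.uIcc t₁ t₂ ⊆ Set.Icc p q := by
    rw [← Set.uIcc_of_le hpq.le] at ht₁ ht₂ ⊢
    exact Set.uIcc_subset_uIcc ht₁ ht₂
  have hcov : ∀ f : ℝ → ℂ, Continuous f →
      ∫ t in t₁..t₂, D t • f (h t) = ∫ x in (c + p)..(c + q), f x := by
    intro f hf
    rw [← h₁, ← h₂]
    refine intervalIntegral.integral_deriv_smul_comp'' (hh.continuousOn.mono hsub) ?_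
      (hDc.mono hsub) hf.continuousOn
    intro x hx
    have hxI : x ∈ Set.Ioo p q := by
      have a1 := hsub (Set.left_mem_uIcc)
      have a2 := hsub (Set.right_mem_uIcc)
      constructor
      · exact lt_of_le_of_lt (le_min a1.1 a2.1) hx.1
      · exact lt_of_lt_of_le hx.2 (max_le a1.2 a2.2)
    have hd := (hh.differentiableOn one_ne_zero x (Set.Ioo_subset_Icc_self hxI)).hasDerivWithinAt
    exact (hd.hasDerivAt (Icc_mem_nhds hxI.1 hxI.2)).hasDerivWithinAt
  set ε : ℝ := if t₁ ≤ t₂ then 1 else -1 with hε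
  set w : ℝ → ℂ := (Set.uIoc t₁ t₂).indicator (fun t => ((ε * D t / T : ℝ) : ℂ)) with hw
  obtain ⟨B, hB⟩ := isCompact_Icc.exists_bound_of_continuousOn
    (f := fun t => ((ε * D t / T : ℝ) : ℂ)) (s := Set.Icc p q)
    (Complex.continuous_ofReal.comp_continuousOn ((hDc.const_mul _).div_const _))
  have hsub' : Set.uIoc t₁ t₂ ⊆ Set.Icc p q := Set.uIoc_subset_uIcc.trans hsub
  have hwm : AEStronglyMeasurable w (volume.restrict (Set.Ioo p q)) := by
    refine AEStronglyMeasurable.indicator ?_ measurableSet_uIoc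
    have : ContinuousOn (fun t => ((ε * D t / T : ℝ) : ℂ)) (Set.Icc p q) :=
      Complex.continuous_ofReal.comp_continuousOn ((hDc.const_mul _).div_const _)
    exact (this.mono Set.Ioo_subset_Icc_self).aestronglyMeasurable measurableSet_Ioo
  have hwL : MemLp w 2 (volume.restrict (Set.Ioo p q)) := by
    refine MemLp.of_bound hwm B ?_
    refine (ae_restrict_mem measurableSet_Ioo).mono fun t ht => ?_
    refine (norm_indicator_le_norm_self _ _).trans (hB t (Set.Ioo_subset_Icc_self ht))
  refine ⟨hwL.toLp w, fun k => ?_⟩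
  set f : ℝ → ℂ := fun x => Complex.exp (-(Complex.I) * k * x) with hf
  have e1 : ∫ t in Set.Ioo p q, Complex.exp (-(Complex.I) * k * (h t)) * (hwL.toLp w) t =
      ∫ t in Set.Ioo p q, (Set.uIoc t₁ t₂).indicator (fun t => (ε / T) • (D t • f (h t))) t := by
    refine integral_congr_ae ?_
    filter_upwards [hwL.coeFn_toLp] with t ht
    rw [ht, hw]
    by_cases hm : t ∈ Set.uIoc t₁ t₂
    · simp only [Set.indicator_of_mem hm, hf, Complex.real_smul]
      push_cast; ring
    · simp only [Set.indicator_of_notMem hm, mul_zero]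
  have e2 : ∫ t in Set.Ioo p q, (Set.uIoc t₁ t₂).indicator (fun t => (ε / T) • (D t • f (h t))) t =
      ∫ t in Set.uIoc t₁ t₂, (ε / T) • (D t • f (h t)) := by
    rw [← integral_Icc_eq_integral_Ioo, setIntegral_indicator measurableSet_uIoc,
      Set.inter_eq_right.mpr hsub']
  have e3 := hcov f (by fun_prop)
  have e4 : ∫ t in t₁..t₂, D t • f (h t) = ε • ∫ t in Set.uIoc t₁ t₂, D t • f (h t) := by
    rw [intervalIntegral.intervalIntegral_eq_integral_uIoc]
  have hεε : ε * ε = 1 := by rw [hε]; split_ifs <;> norm_num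
  have e5 : ∫ t in Set.uIoc t₁ t₂, (ε / T) • (D t • f (h t)) =
      (1 / (T : ℂ)) * ∫ x in (c + p)..(c + q), f x := by
    rw [integral_smul, ← e3, e4, Complex.real_smul, Complex.real_smul]
    push_cast; ring
  have e6 : ∫ x in (c + p)..(c + q), f x = ∫ t in Set.Ioo p q, f (c + t) := by
    rw [← intervalIntegral.integral_comp_add_left, intervalIntegral.integral_of_le hpq.le,
      integral_Ioc_eq_integral_Ioo]
  rw [e1, e2, e5, e6]
  simp [hf]

/-- Let `x̂` be an observable direction (`ξ_max − ξ_min ≥ T`). Then for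
every `y ∈ ℝ^d`, the test function `φ_y^{(x̂)}` belongs to the range of the data-to-pattern
operator `L^{(x̂)} : L²(t_min,t_max) → L²(0,K)` if and only if `y ∈ K_Γ^{(x̂)}`, i.e. iff
`ξ_min − t_min ≤ x̂·y ≤ ξ_max − t_max`. -/
theorem testFunction_in_range_iff_in_strip
    {d : ℕ} (hd : d = 2 ∨ d = 3)
    (tmin tmax T : ℝ) (htmin : 0 < tmin) (htt : tmin < tmax)
    (hT : T = tmax - tmin)
    (K : ℝ) (hK : 0 < K)
    (a : ℝ → EuclideanSpace ℝ (Fin d))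
    (ha : ContDiffOn ℝ 1 a (Set.Icc tmin tmax))
    (xhat : EuclideanSpace ℝ (Fin d)) (hxhat : ‖xhat‖ = 1)
    (h : ℝ → ℝ) (hh : ∀ t, h t = t + inner ℝ xhat (a t))
    (ξmin ξmax : ℝ)
    (hξmin : ξmin = sInf (h '' Set.Icc tmin tmax))
    (hξmax : ξmax = sSup (h '' Set.Icc tmin tmax))
    (hobs : ξmax - ξmin ≥ T)
    (L : Lp ℂ 2 (volume.restrict (Set.Ioo tmin tmax)) →L[ℂ]
         Lp ℂ 2 (volume.restrict (Set.Ioo 0 K)))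
    (hL : ∀ ψ : Lp ℂ 2 (volume.restrict (Set.Ioo tmin tmax)),
      (L ψ : ℝ → ℂ) =ᵐ[volume.restrict (Set.Ioo 0 K)]
        fun τ => ∫ t in Set.Ioo tmin tmax,
          Complex.exp (-(Complex.I) * τ * (h t)) * ψ t) :
    ∀ y : EuclideanSpace ℝ (Fin d),
      (∃ ψ : Lp ℂ 2 (volume.restrict (Set.Ioo tmin tmax)),
        (L ψ : ℝ → ℂ) =ᵐ[volume.restrict (Set.Ioo 0 K)]
          fun k => (1 / (T : ℂ)) *
            ∫ t in Set.Ioo tmin tmax,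
              Complex.exp (-(Complex.I) * k * ((inner ℝ xhat y : ℝ) + t)))
      ↔ (ξmin - tmin ≤ inner ℝ xhat y ∧ (inner ℝ xhat y : ℝ) ≤ ξmax - tmax) := by
  have hTpos : 0 < T := by rw [hT]; linarith
  have hcd : ContDiffOn ℝ 1 h (Set.Icc tmin tmax) := by
    have : h = fun t => t + inner ℝ xhat (a t) := funext hh
    rw [this]
    exact contDiffOn_id.add (contDiffOn_const.inner ℝ ha)
  have hcont := hcd.continuousOn
  have hcpt : IsCompact (h '' Set.Icc tmin tmax) := isCompact_Icc.image_of_continuousOn hcont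
  have hne : (h '' Set.Icc tmin tmax).Nonempty := (Set.nonempty_Icc.mpr htt.le).image h
  have hlo : ∀ t ∈ Set.Icc tmin tmax, ξmin ≤ h t := fun t ht => by
    rw [hξmin]; exact csInf_le hcpt.bddBelow (Set.mem_image_of_mem h ht)
  have hhi : ∀ t ∈ Set.Icc tmin tmax, h t ≤ ξmax := fun t ht => by
    rw [hξmax]; exact le_csSup hcpt.bddAbove (Set.mem_image_of_mem h ht)
  intro y
  set c : ℝ := inner ℝ xhat y with hc
  constructor
  · rintro ⟨ψ, hψ⟩
    have hψi : IntegrableOn (ψ : ℝ → ℂ) (Set.Ioo tmin tmax) :=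
      (Lp.memLp ψ).integrable (by norm_num)
    have hF := aux_entire (volume.restrict (Set.Ioo tmin tmax)) h ψ
      ((hcont.mono Set.Ioo_subset_Icc_self).aestronglyMeasurable measurableSet_Ioo)
      (max |ξmin| |ξmax|)
      ((ae_restrict_mem measurableSet_Ioo).mono fun t ht => by
        have ht' := Set.Ioo_subset_Icc_self ht
        exact abs_le_max_abs_abs (hlo t ht') (hhi t ht')) hψi
    have hG := aux_entire (volume.restrict (Set.Ioo tmin tmax)) (fun t => c + t) (fun _ => 1)
      (by fun_prop) (max |c + tmin| |c + tmax|)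
      ((ae_restrict_mem measurableSet_Ioo).mono fun t ht => by
        exact abs_le_max_abs_abs (by linarith [ht.1]) (by linarith [ht.2]))
      (integrable_const _)
    have hG' := hG.const_mul (1 / (T : ℂ))
    have hFG := aux_ident K hK _ _ hF hG' (by
      refine ((hL ψ).symm.trans hψ).trans ?_
      filter_upwards with k
      simp)
    have hs : ∀ s : ℝ, ∫ t in Set.Ioo tmin tmax, Complex.exp (s * h t) * ψ t =
        (1 / (T : ℂ)) * ∫ t in Set.Ioo tmin tmax, Complex.exp (s * (c + t)) := by
      intro s
      have h1 := congrFun hFG (Complex.I * s)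
      have h2 : -Complex.I * (Complex.I * s) = (s : ℂ) := by
        rw [← mul_assoc, neg_mul, Complex.I_mul_I]; simp
      simpa [h2] using h1
    have hup := aux_bound tmin tmax T ξmax hTpos h (fun t => c + t) ψ (by fun_prop)
      (fun t ht => hhi t (Set.Ioo_subset_Icc_self ht)) hψi
      (fun s _ => by simpa using hs s)
    have hdn := aux_bound tmin tmax T (-ξmin) hTpos (fun t => -h t) (fun t => -(c + t)) ψ
      (by fun_prop)
      (fun t ht => neg_le_neg (hlo t (Set.Ioo_subset_Icc_self ht))) hψi
      (fun s _ => by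
        have := hs (-s)
        push_cast at this ⊢
        simpa only [mul_neg, neg_mul] using this)
    constructor
    · have : ξmin - c ≤ tmin := le_of_forall_gt_imp_ge_of_dense fun b hb => by
        have h1 : tmin < min b ((tmin + tmax) / 2) := lt_min hb (by linarith)
        have := hdn (min b ((tmin + tmax) / 2))
          ⟨h1, lt_of_le_of_lt (min_le_right _ _) (by linarith)⟩
        have h2 := min_le_left b ((tmin + tmax) / 2)
        linarith
      linarith
    · have : tmax ≤ ξmax - c := le_of_forall_lt_imp_le_of_dense fun b hb => by
        have h1 : max b ((tmin + tmax) / 2) < tmax := max_lt hb (by linarith)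
        have := hup (max b ((tmin + tmax) / 2))
          ⟨lt_of_lt_of_le (by linarith) (le_max_right _ _), h1⟩
        have h2 := le_max_left b ((tmin + tmax) / 2)
        linarith
      linarith
  · rintro ⟨hl, hr⟩
    have himg : ∀ x ∈ Set.Icc ξmin ξmax, ∃ t ∈ Set.Icc tmin tmax, h t = x := by
      intro x hx
      have hpc : IsPreconnected (h '' Set.Icc tmin tmax) := isPreconnected_Icc.image h hcont
      have m1 : ξmin ∈ h '' Set.Icc tmin tmax := hξmin ▸ hcpt.sInf_mem hne
      have m2 : ξmax ∈ h '' Set.Icc tmin tmax := hξmax ▸ hcpt.sSup_mem hne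
      exact hpc.ordConnected.out m1 m2 hx
    obtain ⟨t₁, ht₁, h₁⟩ := himg (c + tmin) ⟨by linarith, by linarith⟩
    obtain ⟨t₂, ht₂, h₂⟩ := himg (c + tmax) ⟨by linarith, by linarith⟩
    obtain ⟨ψ, hψ⟩ := aux_exists tmin tmax c T htt h hcd t₁ t₂ ht₁ ht₂ h₁ h₂
    refine ⟨ψ, (hL ψ).trans ?_⟩
    filter_upwards with k using hψ k
end
end
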